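/- arXiv:2002.05071 — 7 statements merged into one kernel-verified Lean document; each statement's English description precedes it below -/
import Mathlib

section
/- Let (V, c, s, r) be a flow network and let f be a preflow with e(r) ≥ 0. Then for every vertex v ∈ V \ {s,r} with excess e(v) > 0, there exists a path from v to s in the residual graph G_f, i.e., a sequence of vertices v = v₀, v₁, …, v_k = s with r_f(v_i, v_{i+1}) > 0 for every 0 ≤ i < k. (This is the reachability claim underlying Lemma 2 of the paper: if a vertex retains positive excess, the source is still reachable from it through residual edges, so the algorithm cannot have terminated.) -/
/-!
Let `A` be the set of vertices reachable from `v` in the residual graph and suppose `s ∉ A`. Sum the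
excesses over `A`. Every vertex of `A` has nonnegative excess and `v ∈ A` has positive excess, so
the total is positive. On the other hand, by antisymmetry the flow inside `A` cancels
(`sum_skew_eq_zero`), so the total is the net flow entering `A` from outside. Every pair leaving
`A` is saturated, hence carries flow `c w u ≥ 0` outwards, so the net flow entering `A` is
nonpositive: a contradiction.
-/

/-- The net flow of an antisymmetric function inside a finite set vanishes. -/
lemma sum_skew_eq_zero {V : Type*} (f : V → V → ℝ) (hskew : ∀ v w, f v w = - f w v)
    (A : Finset V) : ∑ w ∈ A, ∑ u ∈ A, f u w = 0 := by
  have h : ∑ w ∈ A, ∑ u ∈ A, f u w = - ∑ w ∈ A, ∑ u ∈ A, f u w := by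
    conv_lhs => rw [Finset.sum_comm]
    simp only [← Finset.sum_neg_distrib]
    exact Finset.sum_congr rfl fun w _ => Finset.sum_congr rfl fun u _ => hskew w u
  linarith

/-- Reachability along a relation, unfolded into an explicit sequence of vertices. -/
lemma exists_seq_of_reflTransGen {V : Type*} {R : V → V → Prop} {a b : V}
    (h : Relation.ReflTransGen R a b) :
    ∃ (k : ℕ) (p : ℕ → V), p 0 = a ∧ p k = b ∧ ∀ i < k, R (p i) (p (i + 1)) := by
  induction h using Relation.ReflTransGen.head_induction_on with
  | refl => exact ⟨0, fun _ => b, rfl, rfl, fun i hi => absurd hi (Nat.not_lt_zero i)⟩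
  | @head a a' haa' _ ih =>
    obtain ⟨k, p, h0, hk, hp⟩ := ih
    refine ⟨k + 1, fun n => Nat.casesOn n a p, rfl, hk, ?_⟩
    rintro (_ | i) hi
    · simpa [h0] using haa'
    · exact hp i (by omega)

/-- For a preflow `f` with `e(r) ≥ 0`, every vertex `v ∉ {s,r}` with
positive excess has a path to the source `s` in the residual graph. -/
theorem excess_vertex_reaches_source
    {V : Type*} [Fintype V] (c : V → V → ℝ) (s r : V) (hsr : s ≠ r)
    (hc : ∀ v w, 0 ≤ c v w)
    (f : V → V → ℝ)
    (hcap : ∀ v w, f v w ≤ c v w)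
    (hskew : ∀ v w, f v w = - f w v)
    (hnonneg : ∀ v, v ≠ s → v ≠ r → 0 ≤ ∑ u, f u v)
    (hsink : 0 ≤ ∑ u, f u r)
    (v : V) (hvs : v ≠ s) (hvr : v ≠ r) (hex : 0 < ∑ u, f u v) :
    ∃ (k : ℕ) (p : ℕ → V), p 0 = v ∧ p k = s ∧
      ∀ i < k, 0 < c (p i) (p (i + 1)) - f (p i) (p (i + 1)) := by
  classical
  let R : V → V → Prop := fun a b => 0 < c a b - f a b
  suffices h : Relation.ReflTransGen R v s from exists_seq_of_reflTransGen h
  by_contra hs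
  let A : Finset V := Finset.univ.filter fun w => Relation.ReflTransGen R v w
  have hA : ∀ w, w ∈ A ↔ Relation.ReflTransGen R v w := fun w => by simp [A]
  have hpos : 0 < ∑ w ∈ A, ∑ u, f u w := by
    refine Finset.sum_pos' (fun w hw => ?_) ⟨v, (hA v).2 .refl, hex⟩
    by_cases hwr : w = r
    · exact hwr ▸ hsink
    · exact hnonneg w (fun hws => hs (hws ▸ (hA w).1 hw)) hwr
  have hin : ∑ w ∈ A, ∑ u ∈ Aᶜ, f u w ≤ 0 := by
    refine Finset.sum_nonpos fun w hw => Finset.sum_nonpos fun u hu => ?_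
    have hsat : ¬ 0 < c w u - f w u := fun h =>
      Finset.mem_compl.1 hu ((hA u).2 (((hA w).1 hw).tail h))
    linarith [hskew u w, hc w u]
  have hsplit : ∑ w ∈ A, ∑ u, f u w = ∑ w ∈ A, ∑ u ∈ A, f u w + ∑ w ∈ A, ∑ u ∈ Aᶜ, f u w := by
    rw [← Finset.sum_add_distrib]
    exact Finset.sum_congr rfl fun w _ => (Finset.sum_add_sum_compl A _).symm
  linarith [sum_skew_eq_zero f hskew A]
end

section
/- Let (V, c, s, r) be a flow network, let f be a preflow, let v ∈ V \ {s,r} be a vertex with e(v) > 0, and let w ∈ V be a vertex with r_f(v,w) > 0. Set δ = min(e(v), r_f(v,w)) and define f' : V × V → ℝ by f'(v,w) = f(v,w) + δ, f'(w,v) = f(w,v) − δ, and f'(x,y) = f(x,y) for every other pair (x,y). Then f' is again a preflow; in particular f'(x,y) ≤ c(x,y) for all x,y ∈ V. (Lemma 3 of the paper: the push operation never violates the capacity constraint, and it preserves the preflow conditions.) -/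
/-!
A push adds `δ` on `(v, w)` and subtracts it on `(w, v)`. As `0 < δ ≤ c v w - f v w`, the capacity
bound survives on both pairs, and antisymmetry is immediate. The excess of `v` drops by exactly `δ`,
which is at most that excess, the excess of `w` grows by `δ`, and no other excess changes.
-/

/-- **Lemma 3.** The push operation preserves the preflow conditions;
in particular it never violates the capacity constraint. -/
theorem push_preserves_preflow
    {V : Type*} [Fintype V] [DecidableEq V] (c : V → V → ℝ) (s r : V) (hsr : s ≠ r)
    (hc : ∀ v w, 0 ≤ c v w)
    (f : V → V → ℝ)
    (hcap : ∀ v w, f v w ≤ c v w)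
    (hskew : ∀ v w, f v w = - f w v)
    (hnonneg : ∀ u, u ≠ s → u ≠ r → 0 ≤ ∑ x, f x u)
    (v w : V) (hvw : v ≠ w)
    (hvs : v ≠ s) (hvr : v ≠ r)
    (hex : 0 < ∑ u, f u v)
    (hres : 0 < c v w - f v w)
    (δ : ℝ) (hδ : δ = min (∑ u, f u v) (c v w - f v w))
    (f' : V → V → ℝ)
    (hf' : ∀ x y, f' x y =
      if x = v ∧ y = w then f v w + δ
      else if x = w ∧ y = v then f w v - δ
      else f x y) :
    (∀ x y, f' x y ≤ c x y) ∧
    (∀ x y, f' x y = - f' y x) ∧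
    (∀ u, u ≠ s → u ≠ r → 0 ≤ ∑ x, f' x u) := by
  have hδ0 : 0 < δ := hδ ▸ lt_min hex hres
  have hδe : δ ≤ ∑ u, f u v := hδ ▸ min_le_left _ _
  have hδc : δ ≤ c v w - f v w := hδ ▸ min_le_right _ _
  refine ⟨fun x y => ?_, fun x y => ?_, fun u hus hur => ?_⟩
  · rw [hf']
    split_ifs with h1 h2
    · obtain ⟨rfl, rfl⟩ := h1
      linarith
    · obtain ⟨rfl, rfl⟩ := h2
      linarith [hcap x y]
    · exact hcap x y
  · have h1 := hskew x y
    have h2 := hskew v w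
    rw [hf', hf']
    grind
  · -- Additive form of the push; the two cases of `hf'` are disjoint because `v ≠ w`.
    have hadd : ∀ x, f' x u = f x u + (if x = v then (if u = w then δ else 0) else 0)
        - (if x = w then (if u = v then δ else 0) else 0) := by
      intro x
      rw [hf']
      grind
    have hsum : ∑ x, f' x u
        = ∑ x, f x u + (if u = w then δ else 0) - (if u = v then δ else 0) := by
      simp [hadd, Finset.sum_add_distrib, Finset.sum_sub_distrib]
    have h0 := hnonneg u hus hur
    rw [hsum]
    by_cases huv : u = v
    · subst huv
      simp only [if_neg hvw, if_true]
      linarith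
    · rw [if_neg huv]
      split_ifs <;> linarith
end

section
/- Let (V, c, s, r) be a flow network with |V| = n, let f : V × V → ℝ satisfy the capacity and antisymmetry constraints, and let d : V → ℕ be a valid labeling for f with d(s) ≥ n. Then there is no path from s to r in the residual graph G_f, i.e., there is no sequence of vertices s = v₀, v₁, …, v_k = r with r_f(v_i, v_{i+1}) > 0 for all 0 ≤ i < k. -/
/-! Along a residual path the label drops by at most one per edge. Starting from `d s` and ending at
`d r = 0`, it therefore takes each of the `d s + 1` values `0, …, d s`, so `d s + 1 ≤ |V|`, which
contradicts `|V| ≤ d s`. Repeated vertices on the path are harmless, since only the values of `d` on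
`V` are counted. -/

/-- If a valid labeling satisfies `d(s) ≥ n = |V|`, then there is no
path from the source `s` to the sink `r` in the residual graph. -/
theorem no_augmenting_path_of_label_ge_card
    {V : Type*} [Fintype V] (c : V → V → ℝ) (s r : V) (hsr : s ≠ r)
    (hc : ∀ v w, 0 ≤ c v w)
    (f : V → V → ℝ)
    (hcap : ∀ v w, f v w ≤ c v w)
    (hskew : ∀ v w, f v w = - f w v)
    (d : V → ℕ)
    (hdr : d r = 0)
    (hd : ∀ v w, 0 < c v w - f v w → d v ≤ d w + 1)
    (hds : Fintype.card V ≤ d s) :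
    ¬ ∃ (k : ℕ) (p : ℕ → V), p 0 = s ∧ p k = r ∧
        ∀ i < k, 0 < c (p i) (p (i + 1)) - f (p i) (p (i + 1)) := by
  rintro ⟨k, p, h0, hk, hp⟩
  -- Discrete intermediate value property: every value between `d (p i)` and `d s` is a label.
  have key : ∀ i ≤ k, ∀ m, d (p i) ≤ m → m ≤ d s → ∃ v, d v = m := by
    intro i
    induction i with
    | zero =>
      intro _ m h1 h2
      rw [h0] at h1
      exact ⟨s, le_antisymm h1 h2⟩
    | succ i ih =>
      intro hi m h1 h2
      have hstep := hd _ _ (hp i (by omega))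
      rcases h1.eq_or_lt with h | h
      · exact ⟨_, h⟩
      · exact ih (by omega) m (by omega) h2
  have hsub : Finset.range (d s + 1) ⊆ Finset.univ.image d := by
    intro m hm
    obtain ⟨v, hv⟩ := key k le_rfl m (by rw [hk, hdr]; exact Nat.zero_le m)
      (Nat.lt_succ_iff.mp (Finset.mem_range.mp hm))
    exact Finset.mem_image.mpr ⟨v, Finset.mem_univ v, hv⟩
  have h1 := Finset.card_le_card hsub
  have h2 : (Finset.univ.image d).card ≤ Fintype.card V := Finset.card_image_le
  rw [Finset.card_range] at h1
  omega
end

section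
/- Let (V, c, s, r) be a flow network, let f be a flow, and let S ⊆ V be any set of vertices with s ∈ S and r ∉ S. Then the value of f is at most the capacity of the cut (S, V \ S): Σ_{v∈V} f(v,r) ≤ Σ_{u∈S} Σ_{w∈V\S} c(u,w). (Weak duality between flows and cuts, used in establishing that a flow with no augmenting path is maximum.) -/
/-!
Summing the net inflow over all vertices outside `S` leaves only the inflow at the sink, by
conservation. In the same double sum, the flow between two vertices outside `S` cancels by
antisymmetry, so the value of the flow equals the net flow from `S` to its complement, which the
capacities bound termwise.
-/

/-- **weak duality.** The value of a flow is at most the capacity of any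
cut `(S, V \ S)` with `s ∈ S` and `r ∉ S`. -/
theorem flow_value_le_cut_capacity
    {V : Type*} [Fintype V] [DecidableEq V] (c : V → V → ℝ) (s r : V) (hsr : s ≠ r)
    (hc : ∀ v w, 0 ≤ c v w)
    (f : V → V → ℝ)
    (hcap : ∀ v w, f v w ≤ c v w)
    (hskew : ∀ v w, f v w = - f w v)
    (hcons : ∀ v, v ≠ s → v ≠ r → ∑ u, f u v = 0)
    (S : Finset V) (hs : s ∈ S) (hr : r ∉ S) :
    ∑ v, f v r ≤ ∑ u ∈ S, ∑ w ∈ Sᶜ, c u w := by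
  have hvalue : ∑ w ∈ Sᶜ, ∑ u, f u w = ∑ v, f v r := by
    refine Finset.sum_eq_single_of_mem r (Finset.mem_compl.2 hr) fun w hw hwr => hcons w ?_ hwr
    rintro rfl
    exact Finset.mem_compl.1 hw hs
  have hinner : ∑ w ∈ Sᶜ, ∑ u ∈ Sᶜ, f u w = 0 := by
    have hneg : ∑ w ∈ Sᶜ, ∑ u ∈ Sᶜ, f u w = -∑ w ∈ Sᶜ, ∑ u ∈ Sᶜ, f u w := by
      conv_lhs => rw [Finset.sum_comm]
      simp only [← Finset.sum_neg_distrib]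
      exact Finset.sum_congr rfl fun u _ => Finset.sum_congr rfl fun w _ => hskew u w
    linarith
  calc ∑ v, f v r = ∑ w ∈ Sᶜ, (∑ u ∈ S, f u w + ∑ u ∈ Sᶜ, f u w) := by
        simp only [Finset.sum_add_sum_compl, hvalue]
    _ = ∑ u ∈ S, ∑ w ∈ Sᶜ, f u w := by
        rw [Finset.sum_add_distrib, hinner, add_zero, Finset.sum_comm]
    _ ≤ ∑ u ∈ S, ∑ w ∈ Sᶜ, c u w :=
        Finset.sum_le_sum fun u _ => Finset.sum_le_sum fun w _ => hcap u w
end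

section
/- Let (V, c, s, r) be a flow network, let f be a preflow, and let d : V → ℕ be a valid labeling for f. Let v ∈ V \ {s,r} with e(v) > 0 and w ∈ V with r_f(v,w) > 0 and d(v) = d(w) + 1. Set δ = min(e(v), r_f(v,w)) and define f' : V × V → ℝ by f'(v,w) = f(v,w) + δ, f'(w,v) = f(w,v) − δ, and f'(x,y) = f(x,y) for every other pair (x,y). Then d is a valid labeling for f'. (The push operation preserves the valid-labeling invariant of the push-relabel algorithm.) -/
/-- The push operation preserves the valid-labeling invariant of the
push-relabel algorithm. -/
theorem push_preserves_valid_labeling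
    {V : Type*} [Fintype V] [DecidableEq V] (c : V → V → ℝ) (s r : V) (hsr : s ≠ r)
    (hc : ∀ v w, 0 ≤ c v w)
    (f : V → V → ℝ)
    (hcap : ∀ v w, f v w ≤ c v w)
    (hskew : ∀ v w, f v w = - f w v)
    (hnonneg : ∀ u, u ≠ s → u ≠ r → 0 ≤ ∑ x, f x u)
    (d : V → ℕ)
    (hdr : d r = 0)
    (hd : ∀ x y, 0 < c x y - f x y → d x ≤ d y + 1)
    (v w : V)
    (hvs : v ≠ s) (hvr : v ≠ r)
    (hex : 0 < ∑ u, f u v)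
    (hres : 0 < c v w - f v w)
    (hlabel : d v = d w + 1)
    (δ : ℝ) (hδ : δ = min (∑ u, f u v) (c v w - f v w))
    (f' : V → V → ℝ)
    (hf' : ∀ x y, f' x y =
      if x = v ∧ y = w then f v w + δ
      else if x = w ∧ y = v then f w v - δ
      else f x y) :
    d r = 0 ∧ ∀ x y, 0 < c x y - f' x y → d x ≤ d y + 1 := by
  refine ⟨hdr, fun x y hxy => ?_⟩
  rw [hf'] at hxy
  split_ifs at hxy with h₁ h₂
  · obtain ⟨rfl, rfl⟩ := h₁
    exact hlabel.le
  · -- The reverse pair is the only one that can become residual; it points one level up.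
    obtain ⟨rfl, rfl⟩ := h₂
    omega
  · exact hd x y hxy
end

section
/- Let (V, c, s, r) be a flow network, let f be a preflow, and let d : V → ℕ be a valid labeling for f. Let v ∈ V \ {s,r} be a vertex with e(v) > 0 such that the set W = {w ∈ V : r_f(v,w) > 0} is nonempty and d(v) ≤ d(w) for all w ∈ W. Define d' : V → ℕ by d'(v) = 1 + min{d(w) : w ∈ W} and d'(u) = d(u) for u ≠ v. Then d' is a valid labeling for f and d'(v) > d(v). (The relabel operation preserves the valid-labeling invariant and strictly increases the label of the relabeled vertex.) -/
/-!
Since `d v` is a lower bound for `d` on `W`, the new label `1 + min d` exceeds `d v`, so `d ≤ d'`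
pointwise. A residual pair with tail other than `v` therefore keeps its inequality, and one with
tail `v` has its head in `W`, where the definition of the minimum gives the bound.
-/

/-- The relabel operation preserves the valid-labeling invariant and
strictly increases the label of the relabeled vertex. -/
theorem relabel_preserves_valid_labeling
    {V : Type*} [Fintype V] [DecidableEq V] (c : V → V → ℝ) (s r : V) (hsr : s ≠ r)
    (hc : ∀ v w, 0 ≤ c v w)
    (f : V → V → ℝ)
    (hcap : ∀ v w, f v w ≤ c v w)
    (hskew : ∀ v w, f v w = - f w v)
    (hnonneg : ∀ u, u ≠ s → u ≠ r → 0 ≤ ∑ x, f x u)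
    (d : V → ℕ)
    (hdr : d r = 0)
    (hd : ∀ x y, 0 < c x y - f x y → d x ≤ d y + 1)
    (v : V) (hvs : v ≠ s) (hvr : v ≠ r)
    (hex : 0 < ∑ u, f u v)
    (W : Finset V) (hW : W = Finset.univ.filter (fun w => 0 < c v w - f v w))
    (hWne : W.Nonempty)
    (hmin : ∀ w ∈ W, d v ≤ d w)
    (d' : V → ℕ)
    (hd' : ∀ u, d' u = if u = v then 1 + W.inf' hWne d else d u) :
    (d' r = 0 ∧ ∀ x y, 0 < c x y - f x y → d' x ≤ d' y + 1) ∧ d v < d' v := by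
  have hlt : d v < d' v := by
    have h : d v ≤ W.inf' hWne d := Finset.le_inf' _ _ hmin
    rw [hd' v, if_pos rfl]
    omega
  have hne : ∀ u, u ≠ v → d' u = d u := fun u hu => by rw [hd' u, if_neg hu]
  have hle : ∀ u, d u ≤ d' u := by
    intro u
    by_cases hu : u = v
    · subst hu
      exact hlt.le
    · exact (hne u hu).ge
  refine ⟨⟨by rw [hne r hvr.symm, hdr], fun x y hxy => ?_⟩, hlt⟩
  by_cases hx : x = v
  · subst hx
    by_cases hy : y = x
    -- A residual self-loop at the relabeled vertex is possible; its constraint is trivial.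
    · subst hy
      exact Nat.le_succ _
    · have hyW : y ∈ W := hW ▸ Finset.mem_filter.mpr ⟨Finset.mem_univ y, hxy⟩
      have h : W.inf' hWne d ≤ d y := Finset.inf'_le _ hyW
      rw [hne y hy, hd' x, if_pos rfl]
      omega
  -- Raising the label of the head `y` only weakens the constraint.
  · rw [hne x hx]
    exact (hd x y hxy).trans (Nat.succ_le_succ (hle y))
end

section
/- Let (V, c, s, r) be a flow network with |V| = n, let f be a preflow with e(r) ≥ 0, and let d : V → ℕ be a valid labeling for f with d(s) = n. Then every vertex v ∈ V \ {s,r} with e(v) > 0 satisfies d(v) ≤ 2n − 1. (The label of any active vertex in the push-relabel algorithm is bounded by 2n − 1.) -/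
/-!
The proof is a gap argument. If `d v ≥ 2n`, then the `n - 1` vertices other than `v` cannot occupy all
`n` levels `n, …, 2n - 1`, so some level `k` in this range is empty; it lies strictly above `d s = n`
because `s` itself occupies level `n`. No residual edge leaves `S = {x | k < d x}`: it would drop the
label by at least two. Hence every pair leaving `S` is saturated and carries nonnegative flow, so the
total excess of `S`, which is the net flow into `S`, is at most zero (`sum_excess_nonpos`). But `S`
contains `v` and neither `s` nor `r`, so its total excess is positive.
-/

/-- The total excess of `S` equals the net flow into `S`, since the flow inside `S` cancels by
antisymmetry; it is therefore nonpositive when all flow leaving `S` is nonnegative. -/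
lemma sum_excess_nonpos {V : Type*} [Fintype V] (f : V → V → ℝ)
    (hskew : ∀ v w, f v w = - f w v) (S : Finset V)
    (hout : ∀ x ∈ S, ∀ y ∉ S, 0 ≤ f x y) :
    ∑ y ∈ S, ∑ x, f x y ≤ 0 := by
  classical
  have hin : ∑ y ∈ S, ∑ x ∈ S, f x y = 0 := by
    have h1 : ∑ y ∈ S, ∑ x ∈ S, f x y = - ∑ y ∈ S, ∑ x ∈ S, f x y := by
      conv_lhs => rw [Finset.sum_comm]
      simp only [← Finset.sum_neg_distrib]
      exact Finset.sum_congr rfl fun x _ => Finset.sum_congr rfl fun y _ => hskew x y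
    linarith
  have hcross : ∑ y ∈ S, ∑ x ∈ Sᶜ, f x y ≤ 0 := by
    refine Finset.sum_nonpos fun y hy => Finset.sum_nonpos fun x hx => ?_
    have := hout y hy x (Finset.mem_compl.mp hx)
    have := hskew x y
    linarith
  simp only [← Finset.sum_add_sum_compl S, Finset.sum_add_distrib]
  linarith

/-- With a valid labeling satisfying `d(s) = n = |V|`, every active
vertex (positive excess, not `s` or `r`) has label at most `2n − 1`. -/
theorem active_vertex_label_bound
    {V : Type*} [Fintype V] (c : V → V → ℝ) (s r : V) (hsr : s ≠ r)
    (hc : ∀ v w, 0 ≤ c v w)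
    (f : V → V → ℝ)
    (hcap : ∀ v w, f v w ≤ c v w)
    (hskew : ∀ v w, f v w = - f w v)
    (hnonneg : ∀ u, u ≠ s → u ≠ r → 0 ≤ ∑ x, f x u)
    (hsink : 0 ≤ ∑ u, f u r)
    (d : V → ℕ)
    (hdr : d r = 0)
    (hd : ∀ x y, 0 < c x y - f x y → d x ≤ d y + 1)
    (hds : d s = Fintype.card V)
    (v : V) (hvs : v ≠ s) (hvr : v ≠ r)
    (hex : 0 < ∑ u, f u v) :
    d v ≤ 2 * Fintype.card V - 1 := by
  classical
  by_contra hlt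
  have hn : 0 < Fintype.card V := Fintype.card_pos_iff.mpr ⟨v⟩
  have hdv : 2 * Fintype.card V ≤ d v := by omega
  obtain ⟨k, hk, hkim⟩ : ∃ k ∈ Finset.Ico (Fintype.card V) (2 * Fintype.card V),
      k ∉ (Finset.univ.erase v).image d := by
    apply Finset.exists_mem_notMem_of_card_lt_card
    refine Finset.card_image_le.trans_lt ?_
    rw [Finset.card_erase_of_mem (Finset.mem_univ v), Finset.card_univ, Nat.card_Ico]
    omega
  rw [Finset.mem_Ico] at hk
  have hgap : ∀ x, d x ≠ k := by
    intro x hx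
    by_cases hxv : x = v
    · subst hxv
      omega
    · exact hkim (Finset.mem_image.mpr ⟨x, by simp [hxv], hx⟩)
  have hle : ∑ y ∈ Finset.univ.filter (fun x => k < d x), ∑ x, f x y ≤ 0 := by
    apply sum_excess_nonpos f hskew
    intro x hx y hy
    simp only [Finset.mem_filter, Finset.mem_univ, true_and, not_lt] at hx hy
    have hy' := hgap y
    by_contra hneg
    have hstep := hd x y (by linarith [hc x y])
    omega
  have hpos : 0 < ∑ y ∈ Finset.univ.filter (fun x => k < d x), ∑ x, f x y := by
    refine Finset.sum_pos' (fun y hy => ?_) ⟨v, by simp; omega, hex⟩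
    simp only [Finset.mem_filter, Finset.mem_univ, true_and] at hy
    apply hnonneg y
    · rintro rfl
      omega
    · rintro rfl
      omega
  linarith
end
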